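/- arXiv:2411.11849 — 4 statements merged into one kernel-verified Lean document; each statement's English description precedes it below -/
import Mathlib

section
/- For every non-negative integer m, ∑_{n=1}^∞ 4^n · O_{n+m} / (n² · C(2(n+m), n+m) · C(n+m, m)) = (1 / C(2m, m)) · ( O_m · (3 ζ(2) − 4 O_m^{(2)}) + 7 ζ(3) − 8 O_m^{(3)} ). -/
open scoped BigOperators

/-- Generalized odd harmonic number `O_m^{(r)} = ∑_{j=1}^m 1/(2j−1)^r`. -/
noncomputable def oddH (r m : ℕ) : ℂ :=
  ∑ j ∈ Finset.Icc 1 m, 1 / (2 * (j : ℂ) - 1) ^ r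

open Filter Topology Finset

/-- The Beta value `B(n + 1, x) = n! / (x (x + 1) ⋯ (x + n))`. -/
noncomputable def betaSeq (n : ℕ) (x : ℝ) : ℝ :=
  (n.factorial : ℝ) / ∏ j ∈ range (n + 1), (x + j)

/-- The shifted harmonic sum `∑_{j < n} 1 / (x + j)`. -/
noncomputable def shiftH (n : ℕ) (x : ℝ) : ℝ := ∑ j ∈ range n, 1 / (x + j)

lemma prod_shift_pos (n : ℕ) {x : ℝ} (hx : 0 < x) : 0 < ∏ j ∈ range n, (x + (j : ℝ)) :=
  prod_pos fun _ _ => by positivity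

lemma betaSeq_zero (x : ℝ) : betaSeq 0 x = 1 / x := by simp [betaSeq]

lemma shiftH_one (x : ℝ) : shiftH 1 x = 1 / x := by simp [shiftH]

lemma shiftH_succ (n : ℕ) (x : ℝ) : shiftH (n + 1) x = shiftH n x + 1 / (x + n) := by
  simp [shiftH, sum_range_succ]

lemma betaSeq_pos (n : ℕ) {x : ℝ} (hx : 0 < x) : 0 < betaSeq n x :=
  div_pos (by positivity) (prod_shift_pos _ hx)

lemma shiftH_nonneg (n : ℕ) {x : ℝ} (hx : 0 < x) : 0 ≤ shiftH n x :=
  sum_nonneg fun _ _ => by positivity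

lemma inv_le_shiftH_succ (n : ℕ) {x : ℝ} (hx : 0 < x) : 1 / x ≤ shiftH (n + 1) x := by
  induction n with
  | zero => exact (shiftH_one x).ge
  | succ n ih =>
    rw [shiftH_succ]
    have : 0 ≤ 1 / (x + ((n + 1 : ℕ) : ℝ)) := by positivity
    linarith

lemma shiftH_le (n : ℕ) {x : ℝ} (hx : 0 < x) : shiftH n x ≤ n / x := by
  induction n with
  | zero => simp [shiftH]
  | succ n ih =>
    rw [shiftH_succ]
    have : 1 / (x + n) ≤ 1 / x := by gcongr; simp
    push_cast
    rw [add_div]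
    linarith

lemma betaSeq_succ (n : ℕ) {x : ℝ} (hx : 0 < x) :
    betaSeq (n + 1) x * (x + n + 1) = betaSeq n x * (n + 1) := by
  have h := (prod_shift_pos (n + 1) hx).ne'
  have h' : x + ((n : ℝ) + 1) ≠ 0 := by positivity
  unfold betaSeq
  rw [prod_range_succ _ (n + 1), Nat.factorial_succ]
  push_cast
  field_simp
  ring

lemma betaSeq_shift (n : ℕ) {x : ℝ} (hx : 0 < x) :
    betaSeq n (x + 1) * (x + n + 1) = betaSeq n x * x := by
  have h := (prod_shift_pos n (by linarith : 0 < x + 1)).ne'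
  have h' : x + 1 + (n : ℝ) ≠ 0 := by positivity
  unfold betaSeq
  rw [prod_range_succ, prod_range_succ' (fun j : ℕ => x + (j : ℝ)) n]
  have e : ∏ k ∈ range n, (x + ((k + 1 : ℕ) : ℝ)) = ∏ k ∈ range n, (x + 1 + (k : ℝ)) :=
    prod_congr rfl fun k _ => by push_cast; ring
  rw [e]
  field_simp
  push_cast
  ring

lemma shiftH_shift (n : ℕ) (x : ℝ) :
    shiftH n (x + 1) = shiftH (n + 1) x - 1 / x := by
  unfold shiftH
  rw [sum_range_succ' _ n]
  simp only [Nat.cast_zero, add_zero, add_sub_cancel_right]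
  exact sum_congr rfl fun k _ => by push_cast; ring_nf

lemma betaSeq_sub_shift (n : ℕ) {x : ℝ} (hx : 0 < x) :
    betaSeq n x / (n + 1) - betaSeq n (x + 1) / (n + 1) = betaSeq (n + 1) x / (n + 1) := by
  have h : x + n + 1 ≠ 0 := by positivity
  rw [eq_div_of_mul_eq h (betaSeq_succ n hx), eq_div_of_mul_eq h (betaSeq_shift n hx)]
  field_simp
  ring

lemma betaSeq_succ_div (n : ℕ) {x : ℝ} (hx : 0 < x) :
    betaSeq (n + 1) x / (n + 1) = (betaSeq n x - betaSeq (n + 1) x) / x := by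
  have h : x + n + 1 ≠ 0 := by positivity
  rw [eq_div_of_mul_eq h (betaSeq_succ n hx)]
  field_simp
  ring

lemma betaSeq_mul_shiftH_sub_shift (n : ℕ) {x : ℝ} (hx : 0 < x) :
    betaSeq n x * shiftH (n + 1) x / (n + 1) -
        betaSeq n (x + 1) * shiftH (n + 1) (x + 1) / (n + 1) =
      betaSeq (n + 1) x * shiftH (n + 2) x / (n + 1) := by
  have h : x + n + 1 ≠ 0 := by positivity
  rw [eq_div_of_mul_eq h (betaSeq_succ n hx), eq_div_of_mul_eq h (betaSeq_shift n hx),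
    shiftH_shift, shiftH_succ (n + 1)]
  push_cast
  rw [← add_assoc]
  field_simp
  ring

lemma betaSeq_mul_shiftH_succ_div (n : ℕ) {x : ℝ} (hx : 0 < x) :
    betaSeq (n + 1) x * shiftH (n + 2) x / (n + 1) =
      (betaSeq n x - betaSeq (n + 1) x) / x ^ 2 +
        (betaSeq n x * shiftH (n + 1) x - betaSeq (n + 1) x * shiftH (n + 2) x) / x := by
  have h : x + n + 1 ≠ 0 := by positivity
  rw [eq_div_of_mul_eq h (betaSeq_succ n hx), shiftH_succ (n + 1)]
  push_cast
  rw [← add_assoc]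
  field_simp
  ring

lemma betaSeq_antitone {x : ℝ} (hx : 0 < x) : Antitone fun n => betaSeq n x := by
  refine antitone_nat_of_succ_le fun n => ?_
  have h : 0 ≤ (betaSeq n x - betaSeq (n + 1) x) / x := by
    rw [← betaSeq_succ_div n hx]
    have := betaSeq_pos (n + 1) hx
    positivity
  rw [le_div_iff₀ hx, zero_mul] at h
  linarith

lemma betaSeq_mul_shiftH_antitone {x : ℝ} (hx : 0 < x) :
    Antitone fun n => betaSeq n x * shiftH (n + 1) x := by
  refine antitone_nat_of_succ_le fun n => ?_
  have h1 := betaSeq_mul_shiftH_succ_div n hx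
  have h2 : (betaSeq n x - betaSeq (n + 1) x) / x ^ 2 = betaSeq (n + 1) x / (n + 1) * (1 / x) := by
    rw [betaSeq_succ_div n hx]
    field_simp
  have h3 : betaSeq (n + 1) x / (n + 1) * (1 / x) ≤
      betaSeq (n + 1) x / (n + 1) * shiftH (n + 2) x := by
    have := betaSeq_pos (n + 1) hx
    have := inv_le_shiftH_succ (n + 1) hx
    gcongr
  rw [h2, mul_div_right_comm] at h1
  have h : 0 ≤ (betaSeq n x * shiftH (n + 1) x - betaSeq (n + 1) x * shiftH (n + 2) x) / x := by
    linarith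
  rw [le_div_iff₀ hx, zero_mul] at h
  change betaSeq (n + 1) x * shiftH (n + 2) x ≤ _
  linarith

lemma tendsto_zero_of_antitone_of_summable_div {a : ℕ → ℝ} (ha : Antitone a) (h0 : ∀ n, 0 ≤ a n)
    (hs : Summable fun n : ℕ => a (n + 1) / (n + 1)) : Tendsto a atTop (𝓝 0) := by
  have hb : BddBelow (Set.range a) := ⟨0, by rintro _ ⟨n, rfl⟩; exact h0 n⟩
  have hL := tendsto_atTop_ciInf ha hb
  have hL0 : 0 ≤ ⨅ n, a n := le_ciInf h0
  rcases hL0.eq_or_lt with h | h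
  · rwa [← h] at hL
  · exfalso
    have h1 : Summable fun n : ℕ => (⨅ n, a n) * (1 / ((n + 1 : ℕ) : ℝ)) := by
      refine Summable.of_nonneg_of_le (fun n => by positivity) (fun n => ?_) hs
      rw [mul_one_div]
      push_cast
      gcongr
      exact ciInf_le hb _
    rw [summable_mul_left_iff h.ne'] at h1
    exact Real.not_summable_one_div_natCast
      ((summable_nat_add_iff (f := fun n : ℕ => 1 / (n : ℝ)) 1).1 h1)

lemma summable_of_nonneg_of_telescoping {f a : ℕ → ℝ} (hf : ∀ n, 0 ≤ f n) (ha : ∀ n, 0 ≤ a n)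
    (h : ∀ n, f n = a n - a (n + 1)) : Summable f := by
  refine summable_of_sum_range_le (c := a 0) hf fun n => ?_
  rw [sum_congr rfl fun i _ => h i, sum_range_sub']
  linarith [ha n]

lemma hasSum_of_nonneg_of_telescoping {f a : ℕ → ℝ} (hf : ∀ n, 0 ≤ f n)
    (h : ∀ n, f n = a n - a (n + 1)) (ha : Tendsto a atTop (𝓝 0)) : HasSum f (a 0) := by
  rw [hasSum_iff_tendsto_nat_of_nonneg hf]
  simp only [sum_congr rfl fun i _ => h i, sum_range_sub']
  simpa using ha.const_sub (a 0)

lemma hasSum_of_telescoping_columns {F : ℕ → ℕ → ℝ} {c : ℕ → ℝ} (h0 : ∀ k n, 0 ≤ F k n)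
    (hanti : ∀ n, Antitone fun k => F k n) (hlim : ∀ n, Tendsto (fun k => F k n) atTop (𝓝 0))
    (hs : Summable (F 0)) (hc : ∀ k, HasSum (fun n => F k n - F (k + 1) n) (c k)) :
    HasSum c (∑' n, F 0 n) := by
  have hsk : ∀ k, Summable (F k) := fun k =>
    Summable.of_nonneg_of_le (h0 k) (fun n => hanti n (Nat.zero_le k)) hs
  refine hasSum_of_nonneg_of_telescoping (a := fun k => ∑' n, F k n) (fun k => ?_) (fun k => ?_) ?_
  · exact (hc k).nonneg fun n => sub_nonneg.2 (hanti n (Nat.le_succ k))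
  · rw [← (hsk k).tsum_sub (hsk (k + 1)), (hc k).tsum_eq]
  · have := tendsto_tsum_of_dominated_convergence (f := F) (g := fun _ => (0 : ℝ)) (𝓕 := atTop) hs
      hlim (Eventually.of_forall fun k n => by
        rw [Real.norm_of_nonneg (h0 k n)]
        exact hanti n (Nat.zero_le k))
    simpa using this

lemma betaSeq_le (n : ℕ) {x : ℝ} (hx : 0 < x) : betaSeq n x ≤ 1 / x :=
  (betaSeq_antitone hx (Nat.zero_le n)).trans_eq (betaSeq_zero x)

lemma summable_betaSeq_succ_div {x : ℝ} (hx : 0 < x) :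
    Summable fun n : ℕ => betaSeq (n + 1) x / (n + 1) :=
  summable_of_nonneg_of_telescoping (a := fun n => betaSeq n x / x)
    (fun n => by have := betaSeq_pos (n + 1) hx; positivity)
    (fun n => by have := betaSeq_pos n hx; positivity)
    (fun n => by rw [betaSeq_succ_div n hx, sub_div])

lemma summable_betaSeq_mul_shiftH_succ_div {x : ℝ} (hx : 0 < x) :
    Summable fun n : ℕ => betaSeq (n + 1) x * shiftH (n + 2) x / (n + 1) :=
  summable_of_nonneg_of_telescoping
    (a := fun n => betaSeq n x / x ^ 2 + betaSeq n x * shiftH (n + 1) x / x)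
    (fun n => by
      have := betaSeq_pos (n + 1) hx
      have := shiftH_nonneg (n + 2) hx
      positivity)
    (fun n => by
      have := betaSeq_pos n hx
      have := shiftH_nonneg (n + 1) hx
      positivity)
    (fun n => by rw [betaSeq_mul_shiftH_succ_div n hx]; ring)

lemma betaSeq_le_mul_succ (n : ℕ) {x : ℝ} (hx : 0 < x) :
    betaSeq n x ≤ (x + 1) * betaSeq (n + 1) x := by
  have h := betaSeq_succ n hx
  have hp := betaSeq_pos (n + 1) hx
  have h1 : 0 ≤ x * n * betaSeq (n + 1) x := by positivity
  refine le_of_mul_le_mul_right ?_ (by positivity : (0 : ℝ) < n + 1)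
  rw [← h]
  linarith

lemma summable_betaSeq_div {x : ℝ} (hx : 0 < x) :
    Summable fun n : ℕ => betaSeq n x / (n + 1) := by
  refine Summable.of_nonneg_of_le (fun n => ?_) (fun n => ?_)
    ((summable_betaSeq_succ_div hx).mul_left (x + 1))
  · have := betaSeq_pos n hx
    positivity
  · rw [← mul_div_assoc]
    gcongr
    exact betaSeq_le_mul_succ n hx

lemma summable_betaSeq_mul_shiftH_div {x : ℝ} (hx : 0 < x) :
    Summable fun n : ℕ => betaSeq n x * shiftH (n + 1) x / (n + 1) := by
  refine Summable.of_nonneg_of_le (fun n => ?_) (fun n => ?_)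
    ((summable_betaSeq_mul_shiftH_succ_div hx).mul_left (x + 1))
  · have := betaSeq_pos n hx
    have := shiftH_nonneg (n + 1) hx
    positivity
  · rw [← mul_div_assoc, ← mul_assoc]
    have h1 := betaSeq_pos (n + 1) hx
    have h2 := shiftH_nonneg (n + 1) hx
    gcongr
    · exact betaSeq_le_mul_succ n hx
    · rw [shiftH_succ (n + 1)]
      have : 0 ≤ 1 / (x + ((n + 1 : ℕ) : ℝ)) := by positivity
      linarith

lemma tendsto_betaSeq {x : ℝ} (hx : 0 < x) : Tendsto (fun n => betaSeq n x) atTop (𝓝 0) :=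
  tendsto_zero_of_antitone_of_summable_div (betaSeq_antitone hx) (fun n => (betaSeq_pos n hx).le)
    (summable_betaSeq_succ_div hx)

lemma tendsto_betaSeq_mul_shiftH {x : ℝ} (hx : 0 < x) :
    Tendsto (fun n => betaSeq n x * shiftH (n + 1) x) atTop (𝓝 0) :=
  tendsto_zero_of_antitone_of_summable_div (betaSeq_mul_shiftH_antitone hx)
    (fun n => mul_nonneg (betaSeq_pos n hx).le (shiftH_nonneg _ hx))
    (summable_betaSeq_mul_shiftH_succ_div hx)

lemma hasSum_betaSeq_succ_div {x : ℝ} (hx : 0 < x) :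
    HasSum (fun n : ℕ => betaSeq (n + 1) x / (n + 1)) (1 / x ^ 2) := by
  have h := hasSum_of_nonneg_of_telescoping (f := fun n : ℕ => betaSeq (n + 1) x / (n + 1))
    (a := fun n => betaSeq n x / x)
    (fun n => by have := betaSeq_pos (n + 1) hx; positivity)
    (fun n => by rw [betaSeq_succ_div n hx, sub_div])
    (by simpa using (tendsto_betaSeq hx).div_const x)
  convert h using 1
  rw [betaSeq_zero]
  field_simp

lemma hasSum_betaSeq_mul_shiftH_succ_div {x : ℝ} (hx : 0 < x) :
    HasSum (fun n : ℕ => betaSeq (n + 1) x * shiftH (n + 2) x / (n + 1)) (2 / x ^ 3) := by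
  have h := hasSum_of_nonneg_of_telescoping
    (f := fun n : ℕ => betaSeq (n + 1) x * shiftH (n + 2) x / (n + 1))
    (a := fun n => betaSeq n x / x ^ 2 + betaSeq n x * shiftH (n + 1) x / x)
    (fun n => by
      have := betaSeq_pos (n + 1) hx
      have := shiftH_nonneg (n + 2) hx
      positivity)
    (fun n => by rw [betaSeq_mul_shiftH_succ_div n hx]; ring)
    (by simpa using Tendsto.add ((tendsto_betaSeq hx).div_const (x ^ 2))
          ((tendsto_betaSeq_mul_shiftH hx).div_const x))
  convert h using 1
  rw [betaSeq_zero, shiftH_one]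
  field_simp
  norm_num

lemma tendsto_const_div_add_nat_pow (x c : ℝ) {r : ℕ} (hr : r ≠ 0) :
    Tendsto (fun k : ℕ => c / (x + k) ^ r) atTop (𝓝 0) :=
  ((tendsto_pow_atTop hr).comp
    (tendsto_atTop_add_const_left _ x tendsto_natCast_atTop_atTop)).const_div_atTop c

lemma hasSum_one_div_add_sq {x : ℝ} (hx : 0 < x) :
    HasSum (fun k : ℕ => 1 / (x + k) ^ 2) (∑' n : ℕ, betaSeq n x / (n + 1)) := by
  have hxk : ∀ k : ℕ, 0 < x + k := fun k => by positivity
  have hsub : ∀ k n : ℕ, betaSeq n (x + k) / (n + 1) - betaSeq n (x + (k + 1 : ℕ)) / (n + 1) =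
      betaSeq (n + 1) (x + k) / (n + 1) := fun k n => by
    rw [← betaSeq_sub_shift n (hxk k)]; push_cast; rw [add_assoc]
  have h0 : ∀ k n : ℕ, 0 ≤ betaSeq n (x + k) / (n + 1) := fun k n => by
    have := betaSeq_pos n (hxk k)
    positivity
  have h := hasSum_of_telescoping_columns (F := fun k n : ℕ => betaSeq n (x + k) / (n + 1))
    (c := fun k : ℕ => 1 / (x + k) ^ 2) h0 ?_ ?_ ?_ ?_
  · simpa using h
  · refine fun n => antitone_nat_of_succ_le fun k => ?_
    have := betaSeq_pos (n + 1) (hxk k)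
    rw [← sub_nonneg, hsub]
    positivity
  · refine fun n => squeeze_zero (fun k => h0 k n) (fun k => ?_)
      (tendsto_const_div_add_nat_pow x 1 one_ne_zero)
    rw [pow_one]
    exact (div_le_self (betaSeq_pos n (hxk k)).le (by simp)).trans (betaSeq_le n (hxk k))
  · simpa using summable_betaSeq_div hx
  · intro k
    simp only [hsub]
    exact hasSum_betaSeq_succ_div (hxk k)

lemma hasSum_two_div_add_cube {x : ℝ} (hx : 0 < x) :
    HasSum (fun k : ℕ => 2 / (x + k) ^ 3)
      (∑' n : ℕ, betaSeq n x * shiftH (n + 1) x / (n + 1)) := by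
  have hxk : ∀ k : ℕ, 0 < x + k := fun k => by positivity
  have hsub : ∀ k n : ℕ, betaSeq n (x + k) * shiftH (n + 1) (x + k) / (n + 1) -
      betaSeq n (x + (k + 1 : ℕ)) * shiftH (n + 1) (x + (k + 1 : ℕ)) / (n + 1) =
      betaSeq (n + 1) (x + k) * shiftH (n + 2) (x + k) / (n + 1) := fun k n => by
    rw [← betaSeq_mul_shiftH_sub_shift n (hxk k)]; push_cast; rw [add_assoc]
  have h0 : ∀ k n : ℕ, 0 ≤ betaSeq n (x + k) * shiftH (n + 1) (x + k) / (n + 1) := fun k n => by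
    have := betaSeq_pos n (hxk k)
    have := shiftH_nonneg (n + 1) (hxk k)
    positivity
  have h := hasSum_of_telescoping_columns
    (F := fun k n : ℕ => betaSeq n (x + k) * shiftH (n + 1) (x + k) / (n + 1))
    (c := fun k : ℕ => 2 / (x + k) ^ 3) h0 ?_ ?_ ?_ ?_
  · simpa using h
  · refine fun n => antitone_nat_of_succ_le fun k => ?_
    have := betaSeq_pos (n + 1) (hxk k)
    have := shiftH_nonneg (n + 2) (hxk k)
    rw [← sub_nonneg, hsub]
    positivity
  · refine fun n => squeeze_zero (fun k => h0 k n) (fun k => ?_)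
      (tendsto_const_div_add_nat_pow x 1 two_ne_zero)
    have h1 := shiftH_le (n + 1) (hxk k)
    have h2 := betaSeq_le n (hxk k)
    have h3 := shiftH_nonneg (n + 1) (hxk k)
    have h4 := hxk k
    calc betaSeq n (x + k) * shiftH (n + 1) (x + k) / (n + 1)
        ≤ 1 / (x + k) * (((n + 1 : ℕ) : ℝ) / (x + k)) / (n + 1) := by gcongr
      _ = 1 / (x + k) ^ 2 := by push_cast; field_simp
  · simpa using summable_betaSeq_mul_shiftH_div hx
  · intro k
    simp only [hsub]
    exact hasSum_betaSeq_mul_shiftH_succ_div (hxk k)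

lemma oddH_add (r m n : ℕ) :
    oddH r (n + m) = oddH r m + ∑ j ∈ range n, 1 / (2 * ((m : ℂ) + j) + 1) ^ r := by
  induction n with
  | zero => simp
  | succ n ih =>
    rw [sum_range_succ, ← add_assoc, ← ih, show n + 1 + m = (n + m) + 1 by ring]
    unfold oddH
    rw [Finset.sum_Icc_succ_top (by omega)]
    push_cast
    ring_nf

lemma hasSum_one_div_odd_pow {r : ℕ} (hr : 1 < r) :
    HasSum (fun k : ℕ => 1 / (2 * (k : ℂ) + 1) ^ r) ((1 - 1 / 2 ^ r) * riemannZeta r) := by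
  have hsum : Summable fun n : ℕ => 1 / (n : ℂ) ^ r := by
    have := Complex.hasSum_ofReal.2 (Real.summable_one_div_nat_pow.2 hr).hasSum
    push_cast at this
    exact this.summable
  have hz := zeta_nat_eq_tsum_of_gt_one hr
  have he : Summable fun k : ℕ => 1 / ((2 * k : ℕ) : ℂ) ^ r :=
    hsum.comp_injective (mul_right_injective₀ two_ne_zero)
  have ho : Summable fun k : ℕ => 1 / ((2 * k + 1 : ℕ) : ℂ) ^ r :=
    hsum.comp_injective fun a b h => by simpa using h
  have hsplit := tsum_even_add_odd (f := fun n : ℕ => 1 / (n : ℂ) ^ r) he ho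
  have heq : ∑' k : ℕ, 1 / ((2 * k : ℕ) : ℂ) ^ r = 1 / 2 ^ r * riemannZeta r := by
    rw [hz, ← tsum_mul_left]
    exact tsum_congr fun k => by push_cast; rw [mul_pow]; simp [mul_comm]
  rw [heq, ← hz] at hsplit
  convert ho.hasSum using 1
  · funext k
    push_cast
    rfl
  · linear_combination -hsplit

lemma hasSum_one_div_odd_tail {r : ℕ} (hr : 1 < r) (m : ℕ) :
    HasSum (fun k : ℕ => 1 / ((m : ℂ) + 1 / 2 + k) ^ r)
      (2 ^ r * ((1 - 1 / 2 ^ r) * riemannZeta r - oddH r m)) := by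
  have h := (hasSum_nat_add_iff' m).2 (hasSum_one_div_odd_pow hr)
  have hO : oddH r m = ∑ i ∈ range m, 1 / (2 * (i : ℂ) + 1) ^ r := by
    have := oddH_add r 0 m
    simpa [oddH] using this
  rw [hO]
  refine (h.mul_left ((2 : ℂ) ^ r)).congr_fun fun k => ?_
  have : (2 * ((k + m : ℕ) : ℂ) + 1) = 2 * ((m : ℂ) + 1 / 2 + k) := by push_cast; ring
  rw [this, mul_pow]
  field_simp

lemma four_pow_mul_centralBinom_mul_prod (m n : ℕ) :
    (4 : ℝ) ^ n * Nat.centralBinom m * ∏ j ∈ range n, ((m : ℝ) + 1 / 2 + j) =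
      n.factorial * Nat.centralBinom (n + m) * (n + m).choose m := by
  induction n with
  | zero => simp
  | succ n ih =>
    have h1 : ((n : ℝ) + m + 1) * Nat.centralBinom (n + m + 1) =
        2 * (2 * (n + m) + 1) * Nat.centralBinom (n + m) := by
      exact_mod_cast Nat.succ_mul_centralBinom_succ (n + m)
    have h2 : ((n + m).choose m : ℝ) * (n + m + 1) = (n + m + 1).choose m * (n + 1) := by
      have := Nat.choose_mul_succ_eq (n + m) m
      rw [show n + m + 1 - m = n + 1 by omega] at this
      exact_mod_cast this
    rw [prod_range_succ, Nat.factorial_succ, show n + 1 + m = n + m + 1 by ring, pow_succ]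
    push_cast
    linear_combination (4 * ((m : ℝ) + 1 / 2 + n)) * ih -
      n.factorial * ((n + m).choose m : ℝ) * h1 +
      n.factorial * (Nat.centralBinom (n + m + 1) : ℝ) * h2

lemma four_pow_div_choose (m n : ℕ) :
    (4 : ℝ) ^ (n + 1) / (((n : ℝ) + 1) ^ 2 * ((2 * (n + 1 + m)).choose (n + 1 + m) : ℝ) *
        ((n + 1 + m).choose m : ℝ)) =
      1 / ((2 * m).choose m : ℝ) * (betaSeq n (m + 1 / 2) / (n + 1)) := by
  have h := four_pow_mul_centralBinom_mul_prod m (n + 1)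
  simp only [Nat.centralBinom_eq_two_mul_choose] at h
  have hp := (prod_shift_pos (n + 1) (by positivity : (0 : ℝ) < m + 1 / 2)).ne'
  have c1 : ((2 * (n + 1 + m)).choose (n + 1 + m) : ℝ) ≠ 0 := by
    exact_mod_cast (Nat.choose_pos (by omega)).ne'
  have c2 : ((n + 1 + m).choose m : ℝ) ≠ 0 := by
    exact_mod_cast (Nat.choose_pos (by omega)).ne'
  have c3 : ((2 * m).choose m : ℝ) ≠ 0 := by
    exact_mod_cast (Nat.choose_pos (by omega)).ne'
  rw [Nat.factorial_succ] at h
  push_cast at h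
  unfold betaSeq
  rw [div_div, one_div_mul_eq_div, div_div, div_eq_div_iff (by positivity) (by positivity)]
  linear_combination ((n : ℝ) + 1) * h

lemma oddH_one_add (m n : ℕ) :
    oddH 1 (n + m) = oddH 1 m + ((shiftH n (m + 1 / 2) : ℝ) : ℂ) / 2 := by
  rw [oddH_add, shiftH]
  push_cast
  rw [sum_div]
  congr 1
  refine sum_congr rfl fun j _ => ?_
  rw [pow_one, div_div]
  ring_nf

theorem stmt_7 (m : ℕ) :
    ∑' n : ℕ, (4 : ℂ) ^ (n + 1) * oddH 1 (n + 1 + m) /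
        (((n : ℂ) + 1) ^ 2 * (Nat.choose (2 * (n + 1 + m)) (n + 1 + m) : ℂ) *
          (Nat.choose (n + 1 + m) m : ℂ)) =
      (1 / (Nat.choose (2 * m) m : ℂ)) *
        (oddH 1 m * (3 * riemannZeta 2 - 4 * oddH 2 m) +
          7 * riemannZeta 3 - 8 * oddH 3 m) := by
  have hx : (0 : ℝ) < m + 1 / 2 := by positivity
  have hA : ((∑' n : ℕ, betaSeq n (m + 1 / 2) / (n + 1) : ℝ) : ℂ) =
      3 * riemannZeta 2 - 4 * oddH 2 m := by
    have h1 := Complex.hasSum_ofReal.2 (hasSum_one_div_add_sq hx)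
    push_cast at h1
    have h2 := h1.unique (by simpa using hasSum_one_div_odd_tail (r := 2) (by norm_num) m)
    push_cast
    rw [h2]
    ring
  have hB : ((∑' n : ℕ, betaSeq n (m + 1 / 2) * shiftH (n + 1) (m + 1 / 2) / (n + 1) : ℝ) : ℂ) =
      2 * (7 * riemannZeta 3 - 8 * oddH 3 m) := by
    have h1 := Complex.hasSum_ofReal.2 (hasSum_two_div_add_cube hx)
    have h2 := (hasSum_one_div_odd_tail (r := 3) (by norm_num) m).mul_left 2
    have h3 := h1.unique (h2.congr_fun fun k => by push_cast; ring)
    rw [h3]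
    push_cast
    ring
  have sA := Complex.hasSum_ofReal.2 (summable_betaSeq_div hx).hasSum
  have sB := Complex.hasSum_ofReal.2 (summable_betaSeq_mul_shiftH_div hx).hasSum
  rw [hA] at sA
  rw [hB] at sB
  have hS := ((sA.mul_left (oddH 1 m)).add (sB.mul_left (1 / 2))).mul_left
    (1 / (Nat.choose (2 * m) m : ℂ))
  convert hS.tsum_eq using 1
  · refine tsum_congr fun n => ?_
    have h := congrArg (fun y : ℝ => (y : ℂ)) (four_pow_div_choose m n)
    push_cast at h
    rw [mul_div_right_comm, h, oddH_one_add]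
    push_cast
    ring
  · ring
end

section
/- ∑_{n=1}^∞ (H_n² + H_n^{(2)}) / n² = 6 ζ(4). -/
open scoped BigOperators

/-- Generalized harmonic number `H_n^{(2)} = ∑_{j=1}^n 1/j²`. -/
noncomputable def H2 (n : ℕ) : ℂ := ∑ j ∈ Finset.Icc 1 n, 1 / (j : ℂ) ^ 2

open MeasureTheory Set Filter Topology

theorem integrableOn_pow_mul_exp_neg (j : ℕ) :
    IntegrableOn (fun t : ℝ => t ^ j * Real.exp (-t)) (Ioi 0) := by
  refine (Real.GammaIntegral_convergent (s := j + 1) (by positivity)).congr_fun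
    (fun t _ => ?_) measurableSet_Ioi
  simp [mul_comm]

theorem integrableOn_one_sub_exp_pow_mul (n j : ℕ) :
    IntegrableOn (fun t : ℝ => (1 - Real.exp (-t)) ^ n * (t ^ j * Real.exp (-t))) (Ioi 0) := by
  refine (integrableOn_pow_mul_exp_neg j).bdd_mul (c := 1) (by fun_prop) ?_
  refine (ae_restrict_iff' measurableSet_Ioi).2 (ae_of_all _ fun t (ht : 0 < t) => ?_)
  have h₁ : Real.exp (-t) < 1 := by simpa using ‹0 < t›
  have h₂ := Real.exp_pos (-t)
  rw [norm_pow, Real.norm_eq_abs, abs_of_nonneg (by linarith)]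
  exact pow_le_one₀ (by linarith) (by linarith)

theorem integral_pow_mul_exp_neg_mul (j : ℕ) {r : ℝ} (hr : 0 < r) :
    ∫ t : ℝ in Ioi 0, t ^ j * Real.exp (-(r * t)) = j.factorial / r ^ (j + 1) := by
  have h := Real.integral_rpow_mul_exp_neg_mul_Ioi (a := j + 1) (by positivity) hr
  rw [Real.Gamma_nat_eq_factorial] at h
  have h' : (1 / r) ^ ((j : ℝ) + 1) = (1 / r) ^ (j + 1) := by
    rw [← Real.rpow_natCast]; push_cast; rfl
  simp only [add_sub_cancel_right, Real.rpow_natCast, h'] at h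
  rw [h, one_div_pow, one_div_mul_eq_div]

theorem hasDerivAt_one_sub_exp_neg (t : ℝ) :
    HasDerivAt (fun t : ℝ => 1 - Real.exp (-t)) (Real.exp (-t)) t := by
  simpa using ((hasDerivAt_neg t).exp).const_sub 1

theorem tendsto_one_sub_exp_neg_pow (n : ℕ) :
    Tendsto (fun t : ℝ => (1 - Real.exp (-t)) ^ n) atTop (𝓝 1) := by
  simpa using (Real.tendsto_exp_neg_atTop_nhds_zero.const_sub 1).pow n

theorem integral_one_sub_exp_pow (n : ℕ) :
    ∫ t : ℝ in Ioi 0, (1 - Real.exp (-t)) ^ n * (t ^ 0 * Real.exp (-t)) = 1 / ((n : ℝ) + 1) := by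
  have hn : (n : ℝ) + 1 ≠ 0 := by positivity
  rw [integral_Ioi_of_hasDerivAt_of_tendsto' (m := 1 / ((n : ℝ) + 1))
    (f := fun t => (1 - Real.exp (-t)) ^ (n + 1) / ((n : ℝ) + 1)) _
    (integrableOn_one_sub_exp_pow_mul n 0) ((tendsto_one_sub_exp_neg_pow (n + 1)).div_const _)]
  · simp
  · intro t _
    refine (((hasDerivAt_one_sub_exp_neg t).fun_pow (n + 1)).div_const ((n : ℝ) + 1)).congr_deriv ?_
    simp [mul_assoc, mul_div_cancel_left₀ _ hn]

theorem integral_one_sub_exp_pow_succ_mul (n j : ℕ) :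
    ((n : ℝ) + 2) *
        ∫ t : ℝ in Ioi 0, (1 - Real.exp (-t)) ^ (n + 1) * (t ^ (j + 1) * Real.exp (-t)) =
      (n + 1) * (∫ t : ℝ in Ioi 0, (1 - Real.exp (-t)) ^ n * (t ^ (j + 1) * Real.exp (-t))) +
      (j + 1) * ∫ t : ℝ in Ioi 0, (1 - Real.exp (-t)) ^ (n + 1) * (t ^ j * Real.exp (-t)) := by
  have i₁ := (integrableOn_one_sub_exp_pow_mul n (j + 1)).const_mul ((n : ℝ) + 1)
  have i₂ := (integrableOn_one_sub_exp_pow_mul (n + 1) j).const_mul ((j : ℝ) + 1)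
  have i₃ := (integrableOn_one_sub_exp_pow_mul (n + 1) (j + 1)).const_mul ((n : ℝ) + 2)
  have key := integral_Ioi_of_hasDerivAt_of_tendsto' (a := 0) (m := 0)
    (f := fun t : ℝ => (1 - Real.exp (-t)) ^ (n + 1) * (t ^ (j + 1) * Real.exp (-t)))
    (fun t _ => ?_) ((i₁.add i₂).sub i₃) ?_
  · rw [integral_sub' (i₁.add i₂) i₃, integral_add' i₁ i₂] at key
    simp [integral_const_mul] at key
    linarith
  · refine (((hasDerivAt_one_sub_exp_neg t).fun_pow (n + 1)).fun_mul
      ((hasDerivAt_pow (j + 1) t).fun_mul (hasDerivAt_neg t).exp)).congr_deriv ?_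
    simp only [Pi.add_apply, Pi.sub_apply, add_tsub_cancel_right, pow_succ]
    push_cast
    ring
  · simpa using (tendsto_one_sub_exp_neg_pow (n + 1)).mul
      (Real.tendsto_pow_mul_exp_neg_atTop_nhds_zero (j + 1))

theorem integral_one_sub_exp_pow_mul_self (n : ℕ) :
    ∫ t : ℝ in Ioi 0, (1 - Real.exp (-t)) ^ n * (t ^ 1 * Real.exp (-t)) =
      (harmonic (n + 1) : ℝ) / ((n : ℝ) + 1) := by
  induction n with
  | zero => simpa [harmonic] using integral_pow_mul_exp_neg_mul 1 one_pos
  | succ n ih =>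
    have h := integral_one_sub_exp_pow_succ_mul n 0
    rw [zero_add, ih, integral_one_sub_exp_pow] at h
    rw [harmonic_succ (n + 1)]
    push_cast at h ⊢
    have : (n : ℝ) + 2 ≠ 0 := by positivity
    rw [← mul_right_inj' this, h]
    field_simp
    ring

theorem integral_one_sub_exp_pow_mul_sq (n : ℕ) :
    ∫ t : ℝ in Ioi 0, (1 - Real.exp (-t)) ^ n * (t ^ 2 * Real.exp (-t)) =
      ((harmonic (n + 1) : ℝ) ^ 2 + ∑ j ∈ Finset.Icc 1 (n + 1), 1 / (j : ℝ) ^ 2) / (n + 1) := by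
  induction n with
  | zero =>
    have h := integral_pow_mul_exp_neg_mul 2 one_pos
    norm_num [harmonic, Nat.factorial] at h ⊢
    exact h
  | succ n ih =>
    have h := integral_one_sub_exp_pow_succ_mul n 1
    rw [one_add_one_eq_two, ih, integral_one_sub_exp_pow_mul_self] at h
    rw [Finset.sum_Icc_succ_top (by omega)]
    rw [harmonic_succ (n + 1)] at h ⊢
    push_cast at h ⊢
    have : (n : ℝ) + 2 ≠ 0 := by positivity
    rw [← mul_right_inj' this, h]
    field_simp
    ring

theorem tsum_one_sub_exp_pow_eq_tsum_exp_pow {t : ℝ} (ht : 0 < t) :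
    ∑' n : ℕ, ENNReal.ofReal ((1 - Real.exp (-t)) ^ n * (t ^ 2 * Real.exp (-t)) / (n + 1)) =
      ∑' n : ℕ, ENNReal.ofReal (t ^ 3 * Real.exp (-((n + 1) * t))) := by
  have h₁ : Real.exp (-t) < 1 := by simpa using ‹0 < t›
  have h₂ := Real.exp_pos (-t)
  have h₃ : 0 < 1 - Real.exp (-t) := by linarith
  have s₁ := (Real.hasSum_pow_div_log_of_abs_lt_one (x := 1 - Real.exp (-t))
    (by rw [abs_of_pos h₃]; linarith)).mul_right
    (t ^ 2 * Real.exp (-t) / (1 - Real.exp (-t)))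
  have s₂ := (hasSum_geometric_of_lt_one h₂.le h₁).mul_right (t ^ 3 * Real.exp (-t))
  have e₁ : (fun n : ℕ => (1 - Real.exp (-t)) ^ (n + 1) / ((n : ℝ) + 1) *
      (t ^ 2 * Real.exp (-t) / (1 - Real.exp (-t)))) =
      fun n : ℕ => (1 - Real.exp (-t)) ^ n * (t ^ 2 * Real.exp (-t)) / (n + 1) := by
    ext n
    field_simp
    ring
  have e₂ : (fun n : ℕ => Real.exp (-t) ^ n * (t ^ 3 * Real.exp (-t))) =
      fun n : ℕ => t ^ 3 * Real.exp (-((n + 1) * t)) := by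
    ext n
    rw [← Real.exp_nat_mul, mul_left_comm, ← Real.exp_add]
    ring_nf
  rw [e₁] at s₁
  rw [e₂] at s₂
  rw [← ENNReal.ofReal_tsum_of_nonneg (fun n => by positivity) s₁.summable,
    ← ENNReal.ofReal_tsum_of_nonneg (fun n => by positivity) s₂.summable, s₁.tsum_eq, s₂.tsum_eq]
  congr 1
  rw [sub_sub_cancel, Real.log_exp]
  field_simp

theorem tsum_ofReal_integral_eq_lintegral {f : ℕ → ℝ → ℝ} {s : Set ℝ} (hs : MeasurableSet s)
    (hf : ∀ n, IntegrableOn (f n) s) (hf₀ : ∀ n, ∀ t ∈ s, 0 ≤ f n t) :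
    ∑' n, ENNReal.ofReal (∫ t in s, f n t) = ∫⁻ t in s, ∑' n, ENNReal.ofReal (f n t) := by
  rw [lintegral_tsum fun n => (hf n).aestronglyMeasurable.aemeasurable.ennreal_ofReal]
  refine tsum_congr fun n => ofReal_integral_eq_lintegral_ofReal (hf n) ?_
  exact (ae_restrict_iff' hs).2 (ae_of_all _ (hf₀ n))

theorem tsum_harmonic_sq_add_div_sq :
    ∑' n : ℕ, ((harmonic (n + 1) : ℝ) ^ 2 + ∑ j ∈ Finset.Icc 1 (n + 1), 1 / (j : ℝ) ^ 2) /
      ((n : ℝ) + 1) ^ 2 = ∑' n : ℕ, 6 / ((n : ℝ) + 1) ^ 4 := by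
  have h₁ := tsum_ofReal_integral_eq_lintegral (s := Ioi 0)
    (f := fun n t => (1 - Real.exp (-t)) ^ n * (t ^ 2 * Real.exp (-t)) / (n + 1))
    measurableSet_Ioi (fun n => (integrableOn_one_sub_exp_pow_mul n 2).div_const _)
    (fun n t (ht : 0 < t) => by
      have : 0 ≤ 1 - Real.exp (-t) := by simpa using ht.le
      positivity)
  have I (n : ℕ) : ∫ t : ℝ in Ioi 0, t ^ 3 * Real.exp (-((n + 1) * t)) = 6 / ((n : ℝ) + 1) ^ 4 := by
    simpa [Nat.factorial] using integral_pow_mul_exp_neg_mul 3 (r := (n : ℝ) + 1) (by positivity)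
  have h₂ := tsum_ofReal_integral_eq_lintegral (s := Ioi 0)
    (f := fun n t => t ^ 3 * Real.exp (-((n + 1) * t)))
    measurableSet_Ioi (fun n => Integrable.of_integral_ne_zero (by rw [I]; positivity))
    (fun n t (ht : 0 < t) => by positivity)
  rw [setLIntegral_congr_fun measurableSet_Ioi fun t ht => tsum_one_sub_exp_pow_eq_tsum_exp_pow ht,
    ← h₂] at h₁
  simp only [I, integral_div, integral_one_sub_exp_pow_mul_sq, div_div, ← sq] at h₁
  have h := congrArg ENNReal.toReal h₁
  rw [ENNReal.tsum_toReal_eq fun _ => ENNReal.ofReal_ne_top,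
    ENNReal.tsum_toReal_eq fun _ => ENNReal.ofReal_ne_top] at h
  convert h using 3 with n n
  · exact (ENNReal.toReal_ofReal (by positivity)).symm
  · exact (ENNReal.toReal_ofReal (by positivity)).symm

theorem stmt_9 :
    ∑' n : ℕ, ((harmonic (n + 1) : ℂ) ^ 2 + H2 (n + 1)) / ((n : ℂ) + 1) ^ 2 =
      6 * riemannZeta 4 := by
  have h := congrArg ((↑) : ℝ → ℂ) tsum_harmonic_sq_add_div_sq
  push_cast at h
  simp only [H2]
  rw [zeta_eq_tsum_one_div_nat_add_one_cpow (by norm_num), ← tsum_mul_left]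
  refine h.trans (tsum_congr fun n => ?_)
  rw [← Nat.cast_ofNat (n := 4) (R := ℂ), Complex.cpow_natCast]
  ring
end

section
/- ∑_{n=1}^∞ 4^n (O_n² + O_n^{(2)}) / (n² · C(2n, n)) = π⁴/4. -/
open scoped BigOperators

/-- Generalized odd harmonic number `O_n^{(r)} = ∑_{j=1}^n 1/(2j−1)^r` (real valued). -/
noncomputable def oddHR (r n : ℕ) : ℝ :=
  ∑ j ∈ Finset.Icc 1 n, 1 / (2 * (j : ℝ) - 1) ^ r

open Filter Topology Finset

/-- The reciprocal `1 / (x (x + 1) ⋯ (x + n - 1))` of the rising factorial. -/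
noncomputable def invRising (n : ℕ) (x : ℝ) : ℝ := ∏ j ∈ range n, (x + j)⁻¹

/-- The shifted power sum `∑_{j < n} 1 / (x + j) ^ r`. -/
noncomputable def shiftSum (r n : ℕ) (x : ℝ) : ℝ := ∑ j ∈ range n, 1 / (x + j) ^ r

/-- The second derivative in `x` of `invRising n x`, in closed form. -/
noncomputable def invRisingSecond (n : ℕ) (x : ℝ) : ℝ :=
  invRising n x * (shiftSum 1 n x ^ 2 + shiftSum 2 n x)

/-- The second derivative in `x` of `n! * invRising (n + 1) x / x`, in closed form. -/
noncomputable def telescoper (x : ℝ) (n : ℕ) : ℝ :=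
  (n.factorial : ℝ) * invRising (n + 1) x *
    ((shiftSum 1 (n + 1) x ^ 2 + shiftSum 2 (n + 1) x) / x
      + 2 * shiftSum 1 (n + 1) x / x ^ 2 + 2 / x ^ 3)

lemma invRising_nonneg (n : ℕ) {x : ℝ} (hx : 0 < x) : 0 ≤ invRising n x :=
  prod_nonneg fun _ _ => by positivity

lemma shiftSum_nonneg (r n : ℕ) {x : ℝ} (hx : 0 < x) : 0 ≤ shiftSum r n x :=
  sum_nonneg fun _ _ => by positivity

lemma invRisingSecond_nonneg (n : ℕ) {x : ℝ} (hx : 0 < x) : 0 ≤ invRisingSecond n x :=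
  mul_nonneg (invRising_nonneg n hx) (add_nonneg (sq_nonneg _) (shiftSum_nonneg 2 n hx))

lemma invRising_succ (n : ℕ) (x : ℝ) : invRising (n + 1) x = invRising n x * (x + n)⁻¹ :=
  prod_range_succ _ _

lemma shiftSum_succ (r n : ℕ) (x : ℝ) :
    shiftSum r (n + 1) x = shiftSum r n x + 1 / (x + n) ^ r :=
  sum_range_succ _ _

lemma invRising_succ' (n : ℕ) (x : ℝ) :
    invRising (n + 1) x = invRising n (x + 1) * x⁻¹ := by
  unfold invRising
  rw [prod_range_succ']
  simp [add_assoc, add_comm (1 : ℝ)]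

lemma shiftSum_succ' (r n : ℕ) (x : ℝ) :
    shiftSum r (n + 1) x = shiftSum r n (x + 1) + 1 / x ^ r := by
  unfold shiftSum
  rw [sum_range_succ']
  simp [add_assoc, add_comm (1 : ℝ)]

lemma invRisingSecond_sub_shift (n : ℕ) {x : ℝ} (hx : 0 < x) :
    invRisingSecond n x - invRisingSecond n (x + 1) = n * invRisingSecond (n + 1) x := by
  have hy : x + n ≠ 0 := by positivity
  have e1 : invRising n x = invRising (n + 1) x * (x + n) := by
    rw [invRising_succ]; field_simp
  have e2 : invRising n (x + 1) = invRising (n + 1) x * x := by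
    rw [invRising_succ']; field_simp
  have e3 (r : ℕ) : shiftSum r n x = shiftSum r (n + 1) x - 1 / (x + n) ^ r := by
    rw [shiftSum_succ]; ring
  have e4 (r : ℕ) : shiftSum r n (x + 1) = shiftSum r (n + 1) x - 1 / x ^ r := by
    rw [shiftSum_succ']; ring
  unfold invRisingSecond
  rw [e1, e2, e3, e3, e4, e4]
  field_simp
  ring

lemma telescoper_sub (n : ℕ) {x : ℝ} (hx : 0 < x) :
    telescoper x n - telescoper x (n + 1) = n.factorial * invRisingSecond (n + 2) x := by
  have hy : x + n + 1 ≠ 0 := by positivity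
  have e1 : invRising (n + 1) x = invRising (n + 2) x * (x + n + 1) := by
    rw [invRising_succ (n + 1)]; push_cast; rw [← add_assoc]; field_simp
  have e3 (r : ℕ) : shiftSum r (n + 1) x = shiftSum r (n + 2) x - 1 / (x + n + 1) ^ r := by
    rw [shiftSum_succ r (n + 1)]; push_cast; ring
  unfold telescoper invRisingSecond
  rw [e1, e3, e3, Nat.factorial_succ]
  push_cast
  field_simp
  ring

lemma tendsto_invRisingSecond_shift (n : ℕ) (x : ℝ) :
    Tendsto (fun K : ℕ => invRisingSecond (n + 1) (x + K)) atTop (𝓝 0) := by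
  have h (j : ℕ) : Tendsto (fun K : ℕ => (x + K + j)⁻¹) atTop (𝓝 0) :=
    tendsto_inv_atTop_zero.comp (tendsto_atTop_add_const_right _ _
      (tendsto_atTop_add_const_left _ _ tendsto_natCast_atTop_atTop))
  have hA : Tendsto (fun K : ℕ => invRising (n + 1) (x + K)) atTop (𝓝 0) := by
    have := tendsto_finsetProd (range (n + 1)) fun j _ => h j
    simpa [invRising] using this
  have hS (r : ℕ) (hr : r ≠ 0) :
      Tendsto (fun K : ℕ => shiftSum r (n + 1) (x + K)) atTop (𝓝 0) := by
    have := tendsto_finsetSum (range (n + 1)) fun j _ => (h j).pow r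
    simpa [shiftSum, hr] using this
  simpa [invRisingSecond] using
    hA.mul (((hS 1 one_ne_zero).pow 2).add (hS 2 two_ne_zero))

lemma hasSum_sub_of_tendsto_zero {u f : ℕ → ℝ} (hf : ∀ n, 0 ≤ f n)
    (huf : ∀ n, u n - u (n + 1) = f n) (hu : Tendsto u atTop (𝓝 0)) : HasSum f (u 0) := by
  rw [hasSum_iff_tendsto_nat_of_nonneg hf]
  simp_rw [← huf, sum_range_sub']
  simpa using tendsto_const_nhds.sub hu

lemma hasSum_invRisingSecond_shift (n : ℕ) {x : ℝ} (hx : 0 < x) :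
    HasSum (fun k : ℕ => ((n : ℝ) + 1) * invRisingSecond (n + 2) (x + k))
      (invRisingSecond (n + 1) x) := by
  have := hasSum_sub_of_tendsto_zero
    (u := fun K : ℕ => invRisingSecond (n + 1) (x + K))
    (f := fun k : ℕ => ((n : ℝ) + 1) * invRisingSecond (n + 2) (x + k))
    (fun k => mul_nonneg (by positivity) (invRisingSecond_nonneg _ (by positivity)))
    (fun k => by
      have := invRisingSecond_sub_shift (n + 1) (x := x + k) (by positivity)
      push_cast at this ⊢
      rw [← this, add_assoc x])
    (tendsto_invRisingSecond_shift n x)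
  simpa using this

lemma shiftSum_one_le_log (n : ℕ) {x : ℝ} (hx : 0 < x) :
    shiftSum 1 (n + 1) x ≤ 1 / x + 1 + Real.log n := by
  have h1 : shiftSum 1 n (x + 1) ≤ (harmonic n : ℝ) := by
    unfold shiftSum harmonic
    push_cast
    refine sum_le_sum fun j _ => ?_
    rw [pow_one, one_div]
    exact inv_anti₀ (by positivity) (by linarith)
  have h2 := harmonic_le_one_add_log n
  rw [shiftSum_succ', pow_one]
  linarith

lemma shiftSum_two_le_sq (n : ℕ) {x : ℝ} (hx : 0 < x) :
    shiftSum 2 n x ≤ shiftSum 1 n x ^ 2 := by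
  induction n with
  | zero => simp [shiftSum]
  | succ n ih =>
    rw [shiftSum_succ, shiftSum_succ]
    have h1 := shiftSum_nonneg 1 n hx
    have h2 : 0 ≤ 1 / (x + n) := by positivity
    have h3 : 1 / (x + n) ^ 2 = (1 / (x + n)) ^ 2 := by rw [one_div_pow]
    rw [pow_one, h3]
    nlinarith [mul_nonneg h1 h2]

lemma tendsto_telescoper {x : ℝ} (hx : 0 < x) : Tendsto (telescoper x) atTop (𝓝 0) := by
  have hw : Tendsto (fun n : ℕ => (n : ℝ) ^ (-(x / 2))) atTop (𝓝 0) :=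
    (tendsto_rpow_neg_atTop (half_pos hx)).comp tendsto_natCast_atTop_atTop
  have hlog : Tendsto (fun n : ℕ => Real.log n * (n : ℝ) ^ (-(x / 2))) atTop (𝓝 0) := by
    have := ((isLittleO_log_rpow_atTop (half_pos hx)).tendsto_div_nhds_zero).comp
      (tendsto_natCast_atTop_atTop (R := ℝ))
    refine this.congr fun n => ?_
    simp only [Function.comp]
    rw [Real.rpow_neg (Nat.cast_nonneg n), div_eq_mul_inv]
  have hs : Tendsto (fun n : ℕ => shiftSum 1 (n + 1) x * (n : ℝ) ^ (-(x / 2))) atTop (𝓝 0) := by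
    have hb : Tendsto (fun n : ℕ => (1 / x + 1 + Real.log n) * (n : ℝ) ^ (-(x / 2)))
        atTop (𝓝 0) := by
      simpa [add_mul] using (hw.const_mul (1 / x + 1)).add hlog
    refine squeeze_zero (fun n => mul_nonneg (shiftSum_nonneg _ _ hx) (by positivity))
      (fun n => ?_) hb
    exact mul_le_mul_of_nonneg_right (shiftSum_one_le_log n hx) (by positivity)
  have ht : Tendsto (fun n : ℕ => shiftSum 2 (n + 1) x * ((n : ℝ) ^ (-(x / 2))) ^ 2)
      atTop (𝓝 0) := by
    refine squeeze_zero (fun n => mul_nonneg (shiftSum_nonneg _ _ hx) (by positivity))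
      (fun n => ?_) (by simpa using hs.pow 2)
    rw [mul_pow]
    exact mul_le_mul_of_nonneg_right (shiftSum_two_le_sq _ hx) (by positivity)
  have key := (Real.GammaSeq_tendsto_Gamma x).mul
    (((((hs.pow 2).add ht).div_const x).add (((hs.mul hw).const_mul 2).div_const (x ^ 2))).add
      (((hw.pow 2).const_mul 2).div_const (x ^ 3)))
  simp only [ne_eq, OfNat.ofNat_ne_zero, not_false_eq_true, zero_pow, add_zero, zero_div,
    mul_zero] at key
  refine key.congr' ?_
  filter_upwards [eventually_gt_atTop 0] with n hn
  have hn' : (0 : ℝ) < n := by exact_mod_cast hn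
  have hp : (n : ℝ) ^ x * ((n : ℝ) ^ (-(x / 2))) ^ 2 = 1 := by
    rw [pow_two, ← Real.rpow_add hn', ← Real.rpow_add hn']
    ring_nf
    simp
  have hG : Real.GammaSeq x n = (n : ℝ) ^ x * (n.factorial * invRising (n + 1) x) := by
    rw [Real.GammaSeq, invRising, prod_inv_distrib, div_eq_mul_inv, mul_assoc]
  rw [hG, telescoper]
  linear_combination (n.factorial * invRising (n + 1) x *
    ((shiftSum 1 (n + 1) x ^ 2 + shiftSum 2 (n + 1) x) / x
      + 2 * shiftSum 1 (n + 1) x / x ^ 2 + 2 / x ^ 3)) * hp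

lemma hasSum_factorial_mul_invRisingSecond {x : ℝ} (hx : 0 < x) :
    HasSum (fun n : ℕ => (n.factorial : ℝ) * invRisingSecond (n + 2) x) (6 / x ^ 4) := by
  have h := hasSum_sub_of_tendsto_zero (u := telescoper x)
    (f := fun n : ℕ => (n.factorial : ℝ) * invRisingSecond (n + 2) x)
    (fun n => mul_nonneg (by positivity) (invRisingSecond_nonneg _ hx))
    (fun n => telescoper_sub n hx) (tendsto_telescoper hx)
  have h0 : telescoper x 0 = 6 / x ^ 4 := by
    simp only [telescoper, invRising, shiftSum, Nat.factorial_zero, zero_add, prod_range_one,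
      sum_range_one, Nat.cast_zero, Nat.cast_one, add_zero]
    field_simp
    ring
  rwa [h0] at h

lemma hasSum_six_div_half_add_pow_four :
    HasSum (fun k : ℕ => 6 / ((1 / 2 : ℝ) + k) ^ 4) (Real.pi ^ 4) := by
  have hz := hasSum_zeta_four
  have he : HasSum (fun k : ℕ => 1 / ((2 * k : ℕ) : ℝ) ^ 4) (Real.pi ^ 4 / 90 / 16) := by
    refine (hz.div_const 16).congr_fun fun k => ?_
    push_cast
    rw [mul_pow, div_div]
    norm_num [mul_comm]
  have ho : Summable (fun k : ℕ => 1 / ((2 * k + 1 : ℕ) : ℝ) ^ 4) :=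
    hz.summable.comp_injective (i := fun k : ℕ => 2 * k + 1) fun a b h => by
      simpa using h
  have hsum := (he.even_add_odd (f := fun n : ℕ => 1 / (n : ℝ) ^ 4) ho.hasSum).unique hz
  have := ho.hasSum.mul_left 96
  rw [show (96 : ℝ) * ∑' k : ℕ, 1 / ((2 * k + 1 : ℕ) : ℝ) ^ 4 = Real.pi ^ 4 by linarith] at this
  refine this.congr_fun fun k => ?_
  push_cast
  field_simp
  ring

lemma tsum_div_succ_mul_invRisingSecond_half :
    ∑' n : ℕ, (n.factorial : ℝ) / (n + 1) * invRisingSecond (n + 1) (1 / 2) = Real.pi ^ 4 := by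
  have hcol (k : ℕ) := hasSum_factorial_mul_invRisingSecond (x := 1 / 2 + k) (by positivity)
  have hrow (n : ℕ) : HasSum
      (fun k : ℕ => (n.factorial : ℝ) * invRisingSecond (n + 2) (1 / 2 + k))
      ((n.factorial : ℝ) / (n + 1) * invRisingSecond (n + 1) (1 / 2)) := by
    refine ((hasSum_invRisingSecond_shift n (x := 1 / 2) (by norm_num)).mul_left
      ((n.factorial : ℝ) / (n + 1))).congr_fun fun k => ?_
    field_simp
  have hsum : Summable (Function.uncurry fun (k n : ℕ) =>
      (n.factorial : ℝ) * invRisingSecond (n + 2) (1 / 2 + k)) := by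
    refine (summable_prod_of_nonneg fun p =>
      mul_nonneg (by positivity) (invRisingSecond_nonneg _ (by positivity))).2
      ⟨fun k => (hcol k).summable, ?_⟩
    simpa only [Function.uncurry, (hcol _).tsum_eq] using
      hasSum_six_div_half_add_pow_four.summable
  calc _ = ∑' n : ℕ, ∑' k : ℕ, (n.factorial : ℝ) * invRisingSecond (n + 2) (1 / 2 + k) :=
        tsum_congr fun n => (hrow n).tsum_eq.symm
    _ = ∑' k : ℕ, ∑' n : ℕ, (n.factorial : ℝ) * invRisingSecond (n + 2) (1 / 2 + k) :=
        hsum.tsum_comm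
    _ = ∑' k : ℕ, 6 / ((1 / 2 : ℝ) + k) ^ 4 := tsum_congr fun k => (hcol k).tsum_eq
    _ = Real.pi ^ 4 := hasSum_six_div_half_add_pow_four.tsum_eq

lemma shiftSum_half (r n : ℕ) : shiftSum r n (1 / 2) = 2 ^ r * oddHR r n := by
  induction n with
  | zero => simp [shiftSum, oddHR]
  | succ n ih =>
    have h : oddHR r (n + 1) = oddHR r n + 1 / (2 * ((n + 1 : ℕ) : ℝ) - 1) ^ r :=
      sum_Icc_succ_top (by omega) _
    have h2 : 2 * ((n + 1 : ℕ) : ℝ) - 1 = 2 * (1 / 2 + n) := by push_cast; ring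
    rw [shiftSum_succ, ih, h, h2, mul_pow]
    field_simp

lemma invRising_half (n : ℕ) :
    invRising n (1 / 2) = 4 ^ n / (n.factorial * n.centralBinom) := by
  induction n with
  | zero => simp [invRising]
  | succ n ih =>
    have h : ((n : ℝ) + 1) * (n + 1).centralBinom = 2 * (2 * n + 1) * n.centralBinom := by
      exact_mod_cast Nat.succ_mul_centralBinom_succ n
    have h0 : (n.centralBinom : ℝ) ≠ 0 := by exact_mod_cast n.centralBinom_ne_zero
    have h1 : ((n + 1).centralBinom : ℝ) ≠ 0 := by exact_mod_cast (n + 1).centralBinom_ne_zero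
    have h2 : (n.factorial : ℝ) ≠ 0 := by positivity
    rw [invRising_succ, ih, Nat.factorial_succ]
    push_cast
    rw [show ((1 : ℝ) / 2 + n) = (2 * n + 1) / 2 by ring]
    field_simp
    linear_combination 2 * (4 : ℝ) ^ n * h

theorem stmt_10 :
    ∑' n : ℕ, (4 : ℝ) ^ (n + 1) * (oddHR 1 (n + 1) ^ 2 + oddHR 2 (n + 1)) /
        (((n : ℝ) + 1) ^ 2 * (Nat.choose (2 * (n + 1)) (n + 1) : ℝ)) =
      Real.pi ^ 4 / 4 := by
  rw [← tsum_div_succ_mul_invRisingSecond_half, ← tsum_div_const]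
  refine tsum_congr fun n => ?_
  rw [← Nat.centralBinom_eq_two_mul_choose, invRisingSecond, invRising_half, shiftSum_half,
    shiftSum_half, Nat.factorial_succ]
  have h1 : ((n + 1).centralBinom : ℝ) ≠ 0 := by exact_mod_cast (n + 1).centralBinom_ne_zero
  have h2 : (n.factorial : ℝ) ≠ 0 := by positivity
  push_cast
  field_simp
  ring
end

section
/- For every non-negative integer m, ∑_{n=1}^∞ 4^n / (n (n+1) · C(2(n+m), n+m) · C(n+m, m)) = (1 / C(2m, m)) · ( (m − 1/2) (4 O_m^{(2)} − 3 ζ(2)) + 1 ). -/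
open scoped BigOperators

/-- The ratio `n! / (a (a + 1) ⋯ (a + n))`. -/
noncomputable def factorialRatio (a : ℝ) (n : ℕ) : ℝ :=
  (n.factorial : ℝ) / ∏ i ∈ Finset.range (n + 1), (a + i)

theorem factorialRatio_zero (a : ℝ) : factorialRatio a 0 = 1 / a := by
  simp [factorialRatio]

theorem factorialRatio_succ (a : ℝ) (n : ℕ) :
    factorialRatio a (n + 1) = factorialRatio a n * ((n + 1) / (a + n + 1)) := by
  unfold factorialRatio
  rw [Finset.prod_range_succ _ (n + 1), Nat.factorial_succ, div_mul_div_comm]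
  push_cast
  congr 1 <;> ring

theorem factorialRatio_pos {a : ℝ} (ha : 0 < a) (n : ℕ) : 0 < factorialRatio a n := by
  unfold factorialRatio
  exact div_pos (by positivity) (Finset.prod_pos fun i _ => by positivity)

theorem factorialRatio_shift {a : ℝ} (ha : 0 < a) (n : ℕ) :
    factorialRatio (a + 1) n = factorialRatio a n * (a / (a + n + 1)) := by
  induction n with
  | zero =>
    rw [factorialRatio_zero, factorialRatio_zero]
    push_cast
    field_simp
    ring
  | succ n ih =>
    rw [factorialRatio_succ, ih, factorialRatio_succ]
    push_cast
    field_simp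
    ring

theorem factorialRatio_sq_mul_le {a : ℝ} (ha : 1 / 2 ≤ a) (n : ℕ) :
    factorialRatio a n ^ 2 * (n + 1) ≤ (1 / a) ^ 2 := by
  have ha0 : 0 < a := by linarith
  induction n with
  | zero => simp [factorialRatio_zero]
  | succ n ih =>
    refine le_trans ?_ ih
    rw [factorialRatio_succ, mul_pow, mul_assoc]
    refine mul_le_mul_of_nonneg_left ?_ (sq_nonneg _)
    push_cast
    rw [div_pow, div_mul_eq_mul_div, div_le_iff₀ (by positivity)]
    have hn : (0 : ℝ) ≤ n := n.cast_nonneg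
    have h : ((n : ℝ) + 1) * (n + 1 + 1) ≤ (a + n + 1) ^ 2 := by nlinarith
    nlinarith

theorem factorialRatio_le {a : ℝ} (ha : 1 / 2 ≤ a) (n : ℕ) :
    factorialRatio a n ≤ 1 / a * (1 / √((n : ℝ) + 1)) := by
  have ha0 : 0 < a := by linarith
  refine (sq_le_sq₀ (factorialRatio_pos ha0 n).le (by positivity)).1 ?_
  rw [mul_pow, div_pow 1 (√_), Real.sq_sqrt (by positivity), one_pow, mul_one_div,
    le_div_iff₀ (by positivity)]
  exact factorialRatio_sq_mul_le ha n

theorem tendsto_factorialRatio {a : ℝ} (ha : 1 / 2 ≤ a) :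
    Filter.Tendsto (factorialRatio a) Filter.atTop (nhds 0) := by
  have h : Filter.Tendsto (fun n : ℕ => 1 / a * (1 / √((n : ℝ) + 1))) Filter.atTop
      (nhds (1 / a * 0)) := by
    refine Filter.Tendsto.const_mul _ ?_
    simp only [one_div]
    exact Filter.Tendsto.inv_tendsto_atTop (Real.tendsto_sqrt_atTop.comp
      (Filter.tendsto_atTop_add_const_right _ _ tendsto_natCast_atTop_atTop))
  rw [mul_zero] at h
  exact squeeze_zero (fun n => (factorialRatio_pos (by linarith) n).le) (factorialRatio_le ha) h

theorem factorialRatio_div_le {a : ℝ} (ha : 1 / 2 ≤ a) (n : ℕ) :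
    factorialRatio a n / (n + 2) ≤ 1 / a * (1 / ((n + 1 : ℕ) : ℝ) ^ (3 / 2 : ℝ)) := by
  have ha0 : 0 < a := by linarith
  have hn : (0 : ℝ) < (n : ℝ) + 1 := by positivity
  have h32 : ((n + 1 : ℕ) : ℝ) ^ (3 / 2 : ℝ) = √((n : ℝ) + 1) * (n + 1) := by
    rw [Real.sqrt_eq_rpow, ← Real.rpow_add_one (by positivity)]
    push_cast
    norm_num
  rw [h32]
  calc factorialRatio a n / (n + 2)
      ≤ (1 / a * (1 / √((n : ℝ) + 1))) / (n + 1) :=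
        div_le_div₀ (by positivity) (factorialRatio_le ha n) hn (by linarith)
    _ = 1 / a * (1 / (√((n : ℝ) + 1) * (n + 1))) := by
        field_simp

theorem summable_one_div_succ_rpow :
    Summable fun n : ℕ => 1 / ((n + 1 : ℕ) : ℝ) ^ (3 / 2 : ℝ) :=
  (summable_nat_add_iff (f := fun n : ℕ => 1 / (n : ℝ) ^ (3 / 2 : ℝ)) 1).2
    (Real.summable_one_div_nat_rpow.2 (by norm_num))

theorem summable_factorialRatio_div {a : ℝ} (ha : 1 / 2 ≤ a) :
    Summable fun n : ℕ => factorialRatio a n / (n + 2) :=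
  Summable.of_nonneg_of_le
    (fun n => div_nonneg (factorialRatio_pos (by linarith) n).le (by positivity))
    (factorialRatio_div_le ha) (summable_one_div_succ_rpow.mul_left _)

/-- The series `∑ n! / ((n + 2) a (a + 1) ⋯ (a + n))`. -/
noncomputable def factorialRatioSeries (a : ℝ) : ℝ :=
  ∑' n : ℕ, factorialRatio a n / (n + 2)

theorem factorialRatioSeries_nonneg {a : ℝ} (ha : 1 / 2 ≤ a) : 0 ≤ factorialRatioSeries a :=
  tsum_nonneg fun n => div_nonneg (factorialRatio_pos (by linarith) n).le (by positivity)

theorem factorialRatioSeries_le {a : ℝ} (ha : 1 / 2 ≤ a) :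
    factorialRatioSeries a ≤ 1 / a * ∑' n : ℕ, 1 / ((n + 1 : ℕ) : ℝ) ^ (3 / 2 : ℝ) := by
  rw [← tsum_mul_left]
  exact (summable_factorialRatio_div ha).tsum_le_tsum (factorialRatio_div_le ha)
    (summable_one_div_succ_rpow.mul_left _)

theorem factorialRatioSeries_recurrence {a : ℝ} (ha : 1 / 2 ≤ a) :
    a * factorialRatioSeries a - (a - 1) * factorialRatioSeries (a + 1) = 1 / a := by
  have ha0 : 0 < a := by linarith
  have h1 := (summable_factorialRatio_div ha).hasSum.mul_left a
  have h2 := (summable_factorialRatio_div (a := a + 1) (by linarith)).hasSum.mul_left (a - 1)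
  have h3 := (h1.sub h2).tendsto_sum_nat
  have h4 : ∀ N : ℕ, ∑ n ∈ Finset.range N, (a * (factorialRatio a n / (n + 2)) -
      (a - 1) * (factorialRatio (a + 1) n / (n + 2))) = 1 / a - factorialRatio a N := by
    intro N
    rw [← factorialRatio_zero, ← Finset.sum_range_sub']
    refine Finset.sum_congr rfl fun n _ => ?_
    rw [factorialRatio_shift ha0, factorialRatio_succ]
    field_simp
    ring
  simp only [h4] at h3
  have h5 := (tendsto_factorialRatio ha).const_sub (1 / a)
  rw [sub_zero] at h5
  exact tendsto_nhds_unique h3 h5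

theorem hasSum_one_div_odd_sq :
    HasSum (fun k : ℕ => 1 / ((k : ℝ) + 1 / 2) ^ 2) (Real.pi ^ 2 / 2) := by
  have hz := hasSum_zeta_two
  have he : HasSum (fun k : ℕ => 1 / ((2 * k : ℕ) : ℝ) ^ 2) (1 / 4 * (Real.pi ^ 2 / 6)) := by
    refine (hz.mul_left (1 / 4)).congr_fun fun k => ?_
    push_cast
    rw [mul_pow, div_mul_div_comm]
    norm_num
  have ho : Summable fun k : ℕ => 1 / ((2 * k + 1 : ℕ) : ℝ) ^ 2 :=
    hz.summable.comp_injective (i := fun k : ℕ => 2 * k + 1) fun i j h => by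
      simpa using h
  have h := (HasSum.even_add_odd (f := fun n : ℕ => 1 / (n : ℝ) ^ 2) he ho.hasSum).unique hz
  have h' := ho.hasSum.mul_left 4
  have hval : 4 * ∑' k : ℕ, 1 / ((2 * k + 1 : ℕ) : ℝ) ^ 2 = Real.pi ^ 2 / 2 := by linarith
  rw [hval] at h'
  refine h'.congr_fun fun k => ?_
  have : (2 * (k : ℝ) + 1) ≠ 0 := by positivity
  push_cast
  have h2 : (k : ℝ) + 1 / 2 = (2 * k + 1) / 2 := by ring
  rw [h2]
  field_simp
  norm_num

theorem one_sub_factorialRatioSeries_div (m : ℕ) :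
    (1 - factorialRatioSeries ((m : ℝ) + 1 / 2)) / ((m : ℝ) - 1 / 2) =
      Real.pi ^ 2 / 2 - ∑ k ∈ Finset.range m, 1 / ((k : ℝ) + 1 / 2) ^ 2 := by
  set D : ℕ → ℝ := fun m => (1 - factorialRatioSeries ((m : ℝ) + 1 / 2)) / ((m : ℝ) - 1 / 2)
    with hD
  have hne : ∀ k : ℕ, (k : ℝ) - 1 / 2 ≠ 0 := by
    intro k h
    have h2 : ((2 * k : ℕ) : ℝ) = (1 : ℕ) := by push_cast; linarith
    have := Nat.cast_injective h2
    omega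
  have hstep : ∀ k : ℕ, D k - D (k + 1) = 1 / ((k : ℝ) + 1 / 2) ^ 2 := by
    intro k
    have hr := factorialRatioSeries_recurrence (a := (k : ℝ) + 1 / 2)
      (by linarith [(k.cast_nonneg : (0 : ℝ) ≤ k)])
    have e1 : ((k + 1 : ℕ) : ℝ) + 1 / 2 = (k : ℝ) + 1 / 2 + 1 := by push_cast; ring
    have e2 : ((k + 1 : ℕ) : ℝ) - 1 / 2 = (k : ℝ) + 1 / 2 := by push_cast; ring
    have e3 : (k : ℝ) - 1 / 2 = (k : ℝ) + 1 / 2 - 1 := by ring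
    have hk := hne k
    simp only [hD]
    rw [e1, e2]
    rw [e3] at hk ⊢
    have ha : (k : ℝ) + 1 / 2 ≠ 0 := by positivity
    generalize (k : ℝ) + 1 / 2 = a at *
    have hr' : a * (a * factorialRatioSeries a - (a - 1) * factorialRatioSeries (a + 1)) = 1 := by
      rw [hr]; field_simp
    rw [div_sub_div _ _ hk ha, div_eq_div_iff (mul_ne_zero hk ha) (pow_ne_zero 2 ha)]
    linear_combination (-a) * hr'
  have hsum : ∀ N : ℕ, ∑ k ∈ Finset.range N, 1 / ((k : ℝ) + 1 / 2) ^ 2 = D 0 - D N := by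
    intro N
    rw [← Finset.sum_range_sub']
    exact Finset.sum_congr rfl fun k _ => (hstep k).symm
  have hlim : Filter.Tendsto D Filter.atTop (nhds 0) := by
    set C : ℝ := ∑' n : ℕ, 1 / ((n + 1 : ℕ) : ℝ) ^ (3 / 2 : ℝ)
    have hC : 0 ≤ C := tsum_nonneg fun n => by positivity
    have hat : Filter.Tendsto (fun m : ℕ => (m : ℝ) - 1 / 2) Filter.atTop Filter.atTop :=
      Filter.tendsto_atTop_add_const_right _ (-(1 / 2)) tendsto_natCast_atTop_atTop
    refine squeeze_zero_norm (a := fun m : ℕ => (1 + 2 * C) * |(m : ℝ) - 1 / 2|⁻¹) (fun k => ?_) ?_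
    · have hk : (0 : ℝ) ≤ k := k.cast_nonneg
      have ha : 1 / 2 ≤ (k : ℝ) + 1 / 2 := by linarith
      have h0 := factorialRatioSeries_nonneg ha
      have h1 : factorialRatioSeries ((k : ℝ) + 1 / 2) ≤ 2 * C :=
        (factorialRatioSeries_le ha).trans <| mul_le_mul_of_nonneg_right
          (by rw [div_le_iff₀ (by positivity)]; linarith) hC
      rw [hD, Real.norm_eq_abs, abs_div, div_eq_mul_inv]
      refine mul_le_mul_of_nonneg_right ?_ (by positivity)
      rw [abs_le]
      constructor <;> linarith
    · have := (Filter.Tendsto.inv_tendsto_atTop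
        (Filter.tendsto_abs_atTop_atTop.comp hat)).const_mul (1 + 2 * C)
      rwa [mul_zero] at this
  have hD0 : D 0 = Real.pi ^ 2 / 2 := by
    have h1 := hasSum_one_div_odd_sq.tendsto_sum_nat
    simp only [hsum] at h1
    have h2 := hlim.const_sub (D 0)
    rw [sub_zero] at h2
    exact tendsto_nhds_unique h2 h1
  rw [hsum, hD0]
  ring

theorem four_pow_mul_choose_mul_prod (m k : ℕ) :
    (4 : ℝ) ^ k * ((2 * m).choose m : ℝ) * ∏ i ∈ Finset.range k, ((m : ℝ) + 1 / 2 + i) =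
      (k.factorial : ℝ) * ((2 * (k + m)).choose (k + m) : ℝ) * ((k + m).choose m : ℝ) := by
  induction k with
  | zero => simp
  | succ k ih =>
    have h1 : ((k : ℝ) + m + 1) * ((2 * (k + 1 + m)).choose (k + 1 + m) : ℝ) =
        2 * (2 * (k + m) + 1) * ((2 * (k + m)).choose (k + m) : ℝ) := by
      have := Nat.succ_mul_centralBinom_succ (k + m)
      simp only [Nat.centralBinom] at this
      rw [show k + 1 + m = k + m + 1 by ring]
      exact_mod_cast this
    have h2 : ((k : ℝ) + 1) * ((k + 1 + m).choose m : ℝ) =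
        (k + m + 1) * ((k + m).choose m : ℝ) := by
      have := Nat.add_one_mul_choose_eq (k + m) k
      rw [Nat.choose_symm_add, 
        show k + m + 1 = k + 1 + m by ring, Nat.choose_symm_add] at this
      have h3 : ((k + 1 + m : ℕ) : ℝ) * ((k + m).choose m : ℝ) =
        ((k + 1 + m).choose m : ℝ) * ((k + 1 : ℕ) : ℝ) := by exact_mod_cast this
      push_cast at h3
      linear_combination -h3
    have hne : (k : ℝ) + m + 1 ≠ 0 := by positivity
    rw [Finset.prod_range_succ, pow_succ, Nat.factorial_succ]
    push_cast
    apply mul_left_cancel₀ hne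
    linear_combination ((k : ℝ) + m + 1) * 4 * (m + 1 / 2 + k) * ih
      - (k.factorial : ℝ) * ((k : ℝ) + 1) * ((k + 1 + m).choose m : ℝ) * h1
      - (k.factorial : ℝ) * 2 * (2 * (k + m) + 1) * ((2 * (k + m)).choose (k + m) : ℝ) * h2

theorem four_pow_div_choose_eq (m n : ℕ) :
    (4 : ℝ) ^ (n + 1) / (((n : ℝ) + 1) * ((n : ℝ) + 2) *
        ((2 * (n + 1 + m)).choose (n + 1 + m) : ℝ) * ((n + 1 + m).choose m : ℝ)) =
      1 / ((2 * m).choose m : ℝ) * (factorialRatio ((m : ℝ) + 1 / 2) n / (n + 2)) := by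
  have h := four_pow_mul_choose_mul_prod m (n + 1)
  have hA : ((2 * m).choose m : ℝ) ≠ 0 := by
    exact_mod_cast (Nat.choose_pos (by omega)).ne'
  have hB : ((2 * (n + 1 + m)).choose (n + 1 + m) : ℝ) ≠ 0 := by
    exact_mod_cast (Nat.choose_pos (by omega)).ne'
  have hC : ((n + 1 + m).choose m : ℝ) ≠ 0 := by
    exact_mod_cast (Nat.choose_pos (by omega)).ne'
  have hP : ∏ i ∈ Finset.range (n + 1), ((m : ℝ) + 1 / 2 + i) ≠ 0 :=
    (Finset.prod_pos fun i _ => by positivity).ne'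
  have hn1 : (n : ℝ) + 1 ≠ 0 := by positivity
  have hn2 : (n : ℝ) + 2 ≠ 0 := by positivity
  unfold factorialRatio
  rw [Nat.factorial_succ] at h
  push_cast at h
  generalize ∏ i ∈ Finset.range (n + 1), ((m : ℝ) + 1 / 2 + i) = P at *
  rw [div_div, div_mul_div_comm, div_eq_div_iff (by positivity) (by positivity)]
  linear_combination ((n : ℝ) + 2) * h

theorem four_mul_oddH_two (m : ℕ) :
    4 * oddH 2 m = ((∑ k ∈ Finset.range m, 1 / ((k : ℝ) + 1 / 2) ^ 2 : ℝ) : ℂ) := by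
  induction m with
  | zero => simp [oddH]
  | succ k ih =>
    have h : (2 * (k : ℂ) + 1) ≠ 0 := by exact_mod_cast (2 * k).succ_ne_zero
    have h2 : (k : ℂ) + 1 / 2 = (2 * k + 1) / 2 := by ring
    have h3 : 2 * ((k : ℂ) + 1) - 1 = 2 * k + 1 := by ring
    rw [Finset.sum_range_succ, Complex.ofReal_add, ← ih, oddH, oddH,
      Finset.sum_Icc_succ_top (by omega), mul_add]
    push_cast
    rw [h2, h3]
    congr 1
    field_simp
    norm_num

theorem stmt_13 (m : ℕ) :
    ∑' n : ℕ, (4 : ℂ) ^ (n + 1) /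
        (((n : ℂ) + 1) * ((n : ℂ) + 2) * (Nat.choose (2 * (n + 1 + m)) (n + 1 + m) : ℂ) *
          (Nat.choose (n + 1 + m) m : ℂ)) =
      (1 / (Nat.choose (2 * m) m : ℂ)) *
        (((m : ℂ) - 1 / 2) * (4 * oddH 2 m - 3 * riemannZeta 2) + 1) := by
  have hterm : ∀ n : ℕ, (4 : ℂ) ^ (n + 1) /
        (((n : ℂ) + 1) * ((n : ℂ) + 2) * (Nat.choose (2 * (n + 1 + m)) (n + 1 + m) : ℂ) *
          (Nat.choose (n + 1 + m) m : ℂ)) =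
      ((1 / ((2 * m).choose m : ℝ) * (factorialRatio ((m : ℝ) + 1 / 2) n / (n + 2)) : ℝ) : ℂ) := by
    intro n
    rw [← four_pow_div_choose_eq]
    push_cast
    rfl
  have hD := one_sub_factorialRatioSeries_div m
  have hne : (m : ℝ) - 1 / 2 ≠ 0 := by
    intro h
    have h2 : ((2 * m : ℕ) : ℝ) = (1 : ℕ) := by push_cast; linarith
    have := Nat.cast_injective h2
    omega
  rw [div_eq_iff hne] at hD
  have hS : factorialRatioSeries ((m : ℝ) + 1 / 2) = ((m : ℝ) - 1 / 2) *
      (∑ k ∈ Finset.range m, 1 / ((k : ℝ) + 1 / 2) ^ 2 - 3 * (Real.pi ^ 2 / 6)) + 1 := by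
    linear_combination -hD
  rw [tsum_congr hterm, ← Complex.ofReal_tsum, tsum_mul_left, ← factorialRatioSeries, hS,
    four_mul_oddH_two, riemannZeta_two]
  push_cast
  rfl
end
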